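/- arXiv:1210.8303 — 2 statements merged into one kernel-verified Lean document; each statement's English description precedes it below -/
import Mathlib

section
/- The dominator tree D of a flow graph G has both the parent property and the sibling property; that is, for every arc (v, w) of G the immediate dominator d(w) of w is an ancestor of v in D, and no vertex dominates a distinct vertex having the same parent in D. -/
variable {V : Type*}

/-- `IsWalk A u v p`: `p` is a path from `u` to `v` in the digraph with arc
relation `A`, listing all of its vertices in order. -/
def IsWalk (A : V → V → Prop) (u v : V) (p : List V) : Prop :=
  p.Chain' A ∧ p.head? = some u ∧ p.getLast? = some v

/-- A flow graph: a directed graph with arc relation `A` and start vertex `s`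
such that every vertex is reachable from `s` and no arc enters `s`. -/
structure FlowGraph (V : Type*) where
  A : V → V → Prop
  s : V
  reach : ∀ v : V, ∃ p : List V, IsWalk A s v p
  no_enter : ∀ v : V, ¬ A v s

/-- `DomOn A s v w`: `v` lies on every path from `s` to `w` in the digraph with
arc relation `A`. -/
def DomOn (A : V → V → Prop) (s v w : V) : Prop :=
  ∀ p : List V, IsWalk A s w p → v ∈ p

/-- `v` dominates `w` in the flow graph `G`. -/
def FlowGraph.Dom (G : FlowGraph V) (v w : V) : Prop :=
  DomOn G.A G.s v w

/-- A rooted tree on vertex set `V`, given by a parent function: the root is a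
fixed point of the parent function, and iterating the parent function from any
vertex eventually reaches the root. -/
structure ParentTree (V : Type*) where
  parent : V → V
  root : V
  parent_root : parent root = root
  reaches_root : ∀ v : V, ∃ n : ℕ, parent^[n] v = root

/-- `T.Anc x y`: `x` is an ancestor of `y` in the rooted tree `T` (every vertex
is an ancestor of itself). -/
def ParentTree.Anc (T : ParentTree V) (x y : V) : Prop :=
  ∃ n : ℕ, T.parent^[n] y = x

/-- `T` has the parent property with respect to `G`: for every arc `(v, w)`,
the parent of `w` is an ancestor of `v` in `T`. -/
def ParentProperty (G : FlowGraph V) (T : ParentTree V) : Prop :=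
  ∀ v w : V, G.A v w → T.Anc (T.parent w) v

/-- The sibling property with respect to an arbitrary arc relation `A` with
start vertex `s`: no non-root vertex dominates a distinct vertex with the same
parent. -/
def SiblingPropertyOn (A : V → V → Prop) (s : V) (T : ParentTree V) : Prop :=
  ∀ v w : V, v ≠ T.root → w ≠ T.root → v ≠ w → T.parent v = T.parent w →
    ¬ DomOn A s v w

/-- `T` has the sibling property with respect to the flow graph `G`. -/
def SiblingProperty (G : FlowGraph V) (T : ParentTree V) : Prop :=
  SiblingPropertyOn G.A G.s T

/-- `T` is the dominator tree of the digraph with arc relation `A` and start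
vertex `s`: `T` is rooted at `s`, and the parent of every vertex `v ≠ s` is its
immediate dominator, i.e. a strict dominator of `v` that is dominated by every
strict dominator of `v`. -/
def IsDomTreeOn (A : V → V → Prop) (s : V) (T : ParentTree V) : Prop :=
  T.root = s ∧ ∀ v : V, v ≠ s →
    DomOn A s (T.parent v) v ∧ T.parent v ≠ v ∧
    ∀ u : V, DomOn A s u v → u ≠ v → DomOn A s u (T.parent v)

/-- `T` is the dominator tree of the flow graph `G`. -/
def IsDomTree (G : FlowGraph V) (T : ParentTree V) : Prop :=
  IsDomTreeOn G.A G.s T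

/-- `ord` is (the numbering of) a preorder of the rooted tree `T`: an injective
numbering of the vertices such that for every vertex `v` the descendants of `v`
are ordered consecutively, with `v` first. -/
def IsTreePreorder (T : ParentTree V) (ord : V → ℕ) : Prop :=
  Function.Injective ord ∧
  (∀ v x : V, T.Anc v x → ord v ≤ ord x) ∧
  (∀ v x y z : V, T.Anc v x → T.Anc v z → ord x ≤ ord y → ord y ≤ ord z →
    T.Anc v y)

/-- A preorder `ord` of `T` is low-high on the digraph with arc relation `A`
and start vertex `s`: for every `v ≠ s`, either `(t(v), v)` is an arc, or there
are arcs `(u, v)` and `(w, v)` with `u < v < w` in the order and `w` not a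
descendant of `v` in `T`. -/
def LowHighOn (A : V → V → Prop) (s : V) (T : ParentTree V) (ord : V → ℕ) :
    Prop :=
  IsTreePreorder T ord ∧
  ∀ v : V, v ≠ s → (A (T.parent v) v ∨
    ∃ u w : V, A u v ∧ A w v ∧ ord u < ord v ∧ ord v < ord w ∧ ¬ T.Anc v w)

/-- A low-high order of `T` on the flow graph `G`. -/
def LowHigh (G : FlowGraph V) (T : ParentTree V) (ord : V → ℕ) : Prop :=
  LowHighOn G.A G.s T ord

/-- `B` is (the arc relation of) a spanning tree of `G` rooted at `s`: a
subgraph of `G` in which no arc enters `s`, every vertex other than `s` has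
exactly one entering arc, and every vertex is reachable from `s`. -/
def IsSpanningTree (G : FlowGraph V) (B : V → V → Prop) : Prop :=
  (∀ u v : V, B u v → G.A u v) ∧
  (∀ v : V, ¬ B v G.s) ∧
  (∀ v : V, v ≠ G.s → ∃! u : V, B u v) ∧
  (∀ v : V, ∃ p : List V, IsWalk B G.s v p)

/-- Spanning trees `B` and `R` of `G` rooted at `s` are independent: for every
vertex `v`, the paths from `s` to `v` in `B` and in `R` have in common only
dominators of `v`. -/
def Independent (G : FlowGraph V) (B R : V → V → Prop) : Prop :=
  ∀ v : V, ∀ p q : List V, IsWalk B G.s v p → IsWalk R G.s v q →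
    ∀ x : V, x ∈ p → x ∈ q → G.Dom x v

/-- Spanning trees `B` and `R` of `G` rooted at `s` are strongly independent:
for every pair of vertices `v`, `w`, either the path from `s` to `v` in `B` and
the path from `s` to `w` in `R` have in common only common dominators of `v`
and `w`, or the same holds with the roles of `B` and `R` exchanged. -/
def StronglyIndependent (G : FlowGraph V) (B R : V → V → Prop) : Prop :=
  ∀ v w : V,
    (∀ p q : List V, IsWalk B G.s v p → IsWalk R G.s w q →
      ∀ x : V, x ∈ p → x ∈ q → G.Dom x v ∧ G.Dom x w) ∨
    (∀ p q : List V, IsWalk R G.s v p → IsWalk B G.s w q →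
      ∀ x : V, x ∈ p → x ∈ q → G.Dom x v ∧ G.Dom x w)

/-- `IsDerivedArcOf G T v b a`: `(a, b)` is the derived arc of the arc `(v, b)`
of `G` with respect to `T`: `b` is not an ancestor of `v` in `T`, and `a = v`
if `v` is the parent of `b`, while otherwise `a` is the sibling of `b` in `T`
that is an ancestor of `v`. -/
def IsDerivedArcOf (G : FlowGraph V) (T : ParentTree V) (v b a : V) : Prop :=
  G.A v b ∧ ¬ T.Anc b v ∧
    ((v = T.parent b ∧ a = v) ∨
     (v ≠ T.parent b ∧ a ≠ T.root ∧ T.parent a = T.parent b ∧ T.Anc a v))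

/-- The arc relation of the derived graph of `G` with respect to `T`. -/
def DerivedArc (G : FlowGraph V) (T : ParentTree V) (a b : V) : Prop :=
  ∃ v : V, IsDerivedArcOf G T v b a

/-- `S` is the vertex set of a strongly connected subgraph of the digraph with
arc relation `A`. -/
def StronglyConnectedSet (A : V → V → Prop) (S : Set V) : Prop :=
  S.Nonempty ∧ ∀ u ∈ S, ∀ v ∈ S, ∃ p : List V,
    IsWalk A u v p ∧ ∀ x ∈ p, x ∈ S

/-- `G` is reducible: every strongly connected subgraph has a single entry
vertex, i.e. a vertex of the subgraph contained in every path from `s` to a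
vertex of the subgraph. -/
def Reducible (G : FlowGraph V) : Prop :=
  ∀ S : Set V, StronglyConnectedSet G.A S →
    ∃ v ∈ S, ∀ u ∈ S, ∀ p : List V, IsWalk G.A G.s u p → v ∈ p

/-- A digraph is acyclic if it has no cycle (a path from a vertex to itself
with at least one arc). -/
def Acyclic (A : V → V → Prop) : Prop :=
  ¬ ∃ (v : V) (p : List V), IsWalk A v v p ∧ 2 ≤ p.length

/-- `IsHighWalk A ν u v p`: `p` is a high path from `u` to `v`: a path all of
whose vertices other than `u` and `v` are greater (in the numbering `ν`) than
both `u` and `v`. -/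
def IsHighWalk (A : V → V → Prop) (ν : V → ℕ) (u v : V) (p : List V) : Prop :=
  IsWalk A u v p ∧ ∀ x ∈ p, x ≠ u → x ≠ v → ν u < ν x ∧ ν v < ν x

/-! Write `d` for the parent function of the dominator tree. A strict dominator of `v` dominates
`d v`, so climbing from `v` to the root shows that every dominator of `v` is an ancestor of `v`.
Appending an arc `(v, w)` to a path ending at `v` gives a path ending at `w`, so `d w ≠ w`
dominates `v`, which is the parent property. If `v` dominated a sibling `w`, it would dominate
`d w = d v`, and hence be an ancestor of its own parent. -/

section Walk

variable {A : V → V → Prop} {s u v w : V}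

theorem isWalk_singleton (A : V → V → Prop) (v : V) : IsWalk A v v [v] :=
  ⟨List.isChain_singleton v, rfl, rfl⟩

theorem IsWalk.concat {p : List V} (hp : IsWalk A u v p) (hvw : A v w) :
    IsWalk A u w (p ++ [w]) := by
  obtain ⟨hchain, hhead, hlast⟩ := hp
  refine ⟨hchain.append (List.isChain_singleton w) ?_, by simp [hhead], by simp⟩
  simpa [hlast] using hvw

theorem DomOn.eq_start (h : DomOn A s u s) : u = s :=
  List.mem_singleton.mp (h [s] (isWalk_singleton A s))

theorem DomOn.of_arc (h : DomOn A s u w) (hne : u ≠ w) (hvw : A v w) : DomOn A s u v := by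
  intro p hp
  have hmem : u ∈ p ++ [w] := h (p ++ [w]) (hp.concat hvw)
  simpa [hne] using hmem

end Walk

namespace ParentTree

variable {T : ParentTree V} {u v : V}

@[elab_as_elim]
theorem parent_induction (T : ParentTree V) {motive : V → Prop} (v : V)
    (root : motive T.root)
    (step : ∀ v, v ≠ T.root → motive (T.parent v) → motive v) : motive v := by
  obtain ⟨n, hn⟩ := T.reaches_root v
  induction n generalizing v with
  | zero => exact (show v = T.root from hn) ▸ root
  | succ n ih =>
    by_cases hv : v = T.root
    · exact hv ▸ root
    · exact step v hv (ih (T.parent v) hn)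

theorem Anc.refl (T : ParentTree V) (v : V) : T.Anc v v :=
  ⟨0, rfl⟩

theorem Anc.of_parent (h : T.Anc u (T.parent v)) : T.Anc u v :=
  h.imp' Nat.succ fun _ hn => hn

theorem Anc.eq_root (h : T.Anc u T.root) : u = T.root := by
  obtain ⟨n, rfl⟩ := h
  exact Function.iterate_fixed T.parent_root n

theorem not_anc_parent (hv : v ≠ T.root) : ¬ T.Anc v (T.parent v) := by
  induction v using T.parent_induction with
  | root => exact absurd rfl hv
  | step v _ ih =>
    intro hanc
    have hparent : T.parent v ≠ T.root := fun h => hv (h ▸ hanc).eq_root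
    obtain ⟨n, hn⟩ := hanc
    refine ih hparent ⟨n, ?_⟩
    rw [← Function.iterate_succ_apply, Function.iterate_succ_apply', hn]

end ParentTree

section DominatorTree

variable {A : V → V → Prop} {s u v w : V} {T : ParentTree V}

theorem IsDomTreeOn.anc_of_domOn (hT : IsDomTreeOn A s T) (h : DomOn A s u v) : T.Anc u v := by
  obtain ⟨rfl, himm⟩ := hT
  induction v using T.parent_induction with
  | root => exact h.eq_start ▸ .refl T T.root
  | step v hv ih =>
    by_cases huv : u = v
    · exact huv ▸ .refl T u
    · exact .of_parent (ih ((himm v hv).2.2 u h huv))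

theorem IsDomTreeOn.anc_parent_of_arc (hT : IsDomTreeOn A s T) (hw : w ≠ s) (hvw : A v w) :
    T.Anc (T.parent w) v := by
  obtain ⟨hdom, hne, -⟩ := hT.2 w hw
  exact hT.anc_of_domOn (hdom.of_arc hne hvw)

theorem IsDomTreeOn.siblingPropertyOn (hT : IsDomTreeOn A s T) : SiblingPropertyOn A s T := by
  intro v w hv hw hne hparent hdom
  have hdom_parent : DomOn A s v (T.parent w) := (hT.2 w (hT.1 ▸ hw)).2.2 v hdom hne
  exact ParentTree.not_anc_parent hv (hT.anc_of_domOn (hparent ▸ hdom_parent))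

theorem IsDomTree.parentProperty {G : FlowGraph V} (hT : IsDomTree G T) : ParentProperty G T :=
  fun v _ hvw => hT.anc_parent_of_arc (fun hw => G.no_enter v (hw ▸ hvw)) hvw

end DominatorTree

theorem stmt0_general (G : FlowGraph V) (D : ParentTree V) (hD : IsDomTree G D) :
    ParentProperty G D ∧ SiblingProperty G D :=
  ⟨hD.parentProperty, hD.siblingPropertyOn⟩

/-- The dominator tree of a flow graph has both the parent property and the
sibling property. -/
theorem stmt0 [Fintype V] (G : FlowGraph V) (D : ParentTree V)
    (hD : IsDomTree G D) :
    ParentProperty G D ∧ SiblingProperty G D :=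
  stmt0_general G D hD
end

section
/- Let T be a rooted tree on the vertex set of a flow graph G that has the parent property. Let v ≠ s be a vertex and let u be a vertex that is not a descendant of t(v) in T. Then every path in G from u to v contains t(v). -/
variable {V : Type*}

/-!
A path from a non-descendant of `x` to a descendant of `x` has an arc `(a, b)` that enters the
subtree of `x`. If `b ≠ x`, then the parent of `b` also lies in that subtree, hence so does `a`,
since the parent property makes it a descendant of the parent of `b`. So `b = x`.
-/

/-- The parent property of `T` with respect to an arbitrary arc relation `A`: for every arc
`(a, b)`, the parent of `b` is an ancestor of `a`. `ParentProperty G T` is the case `A = G.A`. -/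
def ParentPropertyOn (A : V → V → Prop) (T : ParentTree V) : Prop :=
  ∀ a b : V, A a b → T.Anc (T.parent b) a

namespace ParentTree

variable {T : ParentTree V} {x y z : V}

lemma anc_parent (T : ParentTree V) (x : V) : T.Anc (T.parent x) x :=
  ⟨1, rfl⟩

lemma Anc.trans : T.Anc x y → T.Anc y z → T.Anc x z := by
  rintro ⟨m, rfl⟩ ⟨n, rfl⟩
  exact ⟨m + n, Function.iterate_add_apply T.parent m n z⟩

lemma Anc.eq_or_anc_parent : T.Anc x y → x = y ∨ T.Anc x (T.parent y)
  | ⟨0, h⟩ => Or.inl h.symm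
  | ⟨n + 1, h⟩ => Or.inr ⟨n, h⟩

end ParentTree

lemma ParentPropertyOn.eq_of_arc_of_anc {A : V → V → Prop} {T : ParentTree V}
    (hT : ParentPropertyOn A T) {x a b : V} (hab : A a b) (ha : ¬ T.Anc x a) (hb : T.Anc x b) :
    x = b :=
  hb.eq_or_anc_parent.resolve_right fun hxb ↦ ha (hxb.trans (hT a b hab))

lemma IsWalk.exists_arc_entering {A : V → V → Prop} {u v : V} {p : List V}
    (hp : IsWalk A u v p) {S : Set V} (hu : u ∉ S) (hv : v ∈ S) :
    ∃ a b, A a b ∧ b ∈ p ∧ a ∉ S ∧ b ∈ S := by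
  obtain ⟨hchain, hhead, hlast⟩ := hp
  by_contra! hno
  have hmem : ∀ w ∈ p, w ∈ S := by
    refine (List.IsChain.iff_mem.mp hchain).backwards_induction (· ∈ S) p ?_ fun hne ↦ ?_
    · rintro a b ⟨-, hbp, hab⟩ hb
      by_contra ha
      exact hno a b hab hbp ha hb
    · rwa [List.getLast_of_getLast?_eq_some hlast]
  exact hu (hmem u (List.mem_of_mem_head? hhead))

theorem stmt1_general {A : V → V → Prop} {T : ParentTree V} (hT : ParentPropertyOn A T)
    {x u v : V} (hv : T.Anc x v) (hu : ¬ T.Anc x u) {p : List V} (hp : IsWalk A u v p) :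
    x ∈ p := by
  obtain ⟨a, b, hab, hbp, ha, hb⟩ := hp.exists_arc_entering (S := {w | T.Anc x w}) hu hv
  rwa [hT.eq_of_arc_of_anc hab ha hb]

/-- If `T` has the parent property, `v ≠ s`, and `u` is not a descendant of
`t(v)` in `T`, then every path in `G` from `u` to `v` contains `t(v)`. -/
theorem stmt1 [Fintype V] (G : FlowGraph V) (T : ParentTree V)
    (hroot : T.root = G.s) (hpp : ParentProperty G T)
    (v : V) (hv : v ≠ G.s) (u : V) (hu : ¬ T.Anc (T.parent v) u)
    (p : List V) (hp : IsWalk G.A u v p) :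
    T.parent v ∈ p :=
  stmt1_general hpp (T.anc_parent v) hu hp
end
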